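/- Let d be a graph pseudometric on a set X with edge set E, let xy ∈ [X]² \ E, and let r be a real number with ď(x,y) ≤ r ≤ d̂(x,y). Then the function D = d ∪ {⟨xy,r⟩} on the graph E ∪ {xy} is a graph pseudometric. -/

import Mathlib

open scoped Classical

universe u

namespace GraphMetricPaper

variable {X : Type u}

/-- The vertex set `V = ⋃ E` of a graph given by an adjacency relation `E`. -/
def Vtx (E : X → X → Prop) : Set X := {x | ∃ y, E x y}

/-- Two points are joined by a walk in the graph `E`. -/
def Joined (E : X → X → Prop) (x y : X) : Prop :=
  ∃ (n : ℕ) (c : ℕ → X), c 0 = x ∧ c n = y ∧ ∀ i, i < n → E (c i) (c (i + 1))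

/-- The set of weights of walks from `x` to `y`. -/
def walkSums (E : X → X → Prop) (d : X → X → ℝ) (x y : X) : Set ℝ :=
  {s | ∃ (n : ℕ) (c : ℕ → X), c 0 = x ∧ c n = y ∧ (∀ i, i < n → E (c i) (c (i + 1))) ∧
    s = ∑ i ∈ Finset.range n, d (c i) (c (i + 1))}

/-- The shortest-path pseudometric `d̂` determined by a weight function `d` on a graph `E`. -/
noncomputable def hatd (E : X → X → Prop) (d : X → X → ℝ) (x y : X) : ℝ :=
  sInf (walkSums E d x y)

/-- The function `ď` bounding the possible extensions of `d` from below: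
`ď(x,y) = sup_{ab ∈ E} max {0, d(ab) - d̂(a,x) - d̂(y,b)}`. -/
noncomputable def checkd (E : X → X → Prop) (d : X → X → ℝ) (x y : X) : ℝ :=
  sSup ({0} ∪ {r | ∃ a b, E a b ∧ r = d a b - hatd E d a x - hatd E d y b})

/-- The pseudometric `d̈` on doubletons:
`d̈(xy,uv) = min {d̂(x,u) + d̂(y,v), d̂(x,v) + d̂(y,u)}`. -/
noncomputable def ddot (E : X → X → Prop) (d : X → X → ℝ) (x y u v : X) : ℝ :=
  min (hatd E d x u + hatd E d y v) (hatd E d x v + hatd E d y u)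

/-- `d` is a graph pseudometric with edge relation `E`:  `E` is a (symmetric, irreflexive)
connected graph, `d` is a nonnegative symmetric weight on the edges, and `d = d̂` on edges. -/
structure IsGraphPseudometric (E : X → X → Prop) (d : X → X → ℝ) : Prop where
  symm : ∀ ⦃a b⦄, E a b → E b a
  irrefl : ∀ a, ¬ E a a
  wt_symm : ∀ ⦃a b⦄, E a b → d a b = d b a
  nonneg : ∀ ⦃a b⦄, E a b → 0 ≤ d a b
  connected : ∀ x ∈ Vtx E, ∀ y ∈ Vtx E, Joined E x y
  edge_eq : ∀ ⦃a b⦄, E a b → d a b = hatd E d a b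

/-- A graph metric is a graph pseudometric with strictly positive weights. -/
def IsGraphMetric (E : X → X → Prop) (d : X → X → ℝ) : Prop :=
  IsGraphPseudometric E d ∧ ∀ ⦃a b⦄, E a b → 0 < d a b

/-- A floppy graph pseudometric: `ď(x,y) < d̂(x,y)` for every `xy ∈ [V]² \ E`. -/
def FloppyPseudometric (E : X → X → Prop) (d : X → X → ℝ) : Prop :=
  IsGraphPseudometric E d ∧
    ∀ x ∈ Vtx E, ∀ y ∈ Vtx E, x ≠ y → ¬ E x y → checkd E d x y < hatd E d x y

/-- A floppy graph metric: `ď(x,y) < d̂(x,y)` for every `xy ∈ [V]² \ E`. -/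
def FloppyMetric (E : X → X → Prop) (d : X → X → ℝ) : Prop :=
  IsGraphMetric E d ∧
    ∀ x ∈ Vtx E, ∀ y ∈ Vtx E, x ≠ y → ¬ E x y → checkd E d x y < hatd E d x y

/-- The edge relation of the one-step extension `E ∪ {xy}`. -/
def extEdge (E : X → X → Prop) (x y : X) : X → X → Prop :=
  fun a b => E a b ∨ (a = x ∧ b = y) ∨ (a = y ∧ b = x)

/-- The weight function of the one-step extension `d ∪ {⟨xy, r⟩}`. -/
noncomputable def extWt (d : X → X → ℝ) (x y : X) (r : ℝ) : X → X → ℝ :=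
  fun a b => if (a = x ∧ b = y) ∨ (a = y ∧ b = x) then r else d a b

/-- The set `[V]² \ E` of unordered pairs of distinct vertices that are not edges. -/
def nonEdgePairs (E : X → X → Prop) : Set (Sym2 X) :=
  {e | ∃ a b : X, e = s(a, b) ∧ a ≠ b ∧ a ∈ Vtx E ∧ b ∈ Vtx E ∧ ¬ E a b}

/-- A set of (unordered) weighted pairs, presented as a relation `R`, is a full metric
on `V`: it is symmetric, its domain is exactly `[V]²`, it is single-valued, positive,
and satisfies the triangle inequality. -/
def IsFullMetricRel (V : Set X) (R : X → X → ℝ → Prop) : Prop :=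
  (∀ a b r, R a b r → R b a r) ∧
  (∀ a b r, R a b r → a ∈ V ∧ b ∈ V ∧ a ≠ b) ∧
  (∀ a b, a ∈ V → b ∈ V → a ≠ b → ∃ r, R a b r) ∧
  (∀ a b r s, R a b r → R a b s → r = s) ∧
  (∀ a b r, R a b r → 0 < r) ∧
  (∀ a b c r s t, R a b r → R b c s → R a c t → t ≤ r + s)

/-- A weight function `D` on `[V]²` is a full metric on `V`. -/
def IsFullMetricOn (V : Set X) (D : X → X → ℝ) : Prop :=
  (∀ a b, a ∈ V → b ∈ V → a ≠ b → D a b = D b a) ∧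
  (∀ a b, a ∈ V → b ∈ V → a ≠ b → 0 < D a b) ∧
  (∀ a b c, a ∈ V → b ∈ V → c ∈ V → a ≠ b → b ≠ c → a ≠ c → D a c ≤ D a b + D b c)

/-- Player I has a winning strategy in the metric-extending game `Game_d(lam, Fam)`:
there are functions `S1, S2` choosing, for each inning `β < lam` and each sequence of
previous answers of player II, a legal doubleton in `[V]²` and a set from `Fam`, such that
for every play of player II respecting the strategy, the resulting relation
`d ∪ {⟨x_α y_α, r_α⟩ : α < lam}` is a full metric on `V`. -/
def WinningStratI (V : Set X) (E : X → X → Prop) (d : X → X → ℝ)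
    (lam : Ordinal.{u}) (Fam : Set (Set ℝ)) : Prop :=
  ∃ (S1 : ∀ β : Ordinal.{u}, β < lam → (∀ α : Ordinal.{u}, α < β → ℝ) → X × X)
    (S2 : ∀ β : Ordinal.{u}, β < lam → (∀ α : Ordinal.{u}, α < β → ℝ) → Set ℝ),
    (∀ β hβ s, S2 β hβ s ∈ Fam) ∧
    (∀ β hβ s, (S1 β hβ s).1 ∈ V ∧ (S1 β hβ s).2 ∈ V ∧ (S1 β hβ s).1 ≠ (S1 β hβ s).2) ∧
    (∀ s : ∀ α : Ordinal.{u}, α < lam → ℝ,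
      (∀ α (hα : α < lam), s α hα ∈ S2 α hα (fun γ hγ => s γ (hγ.trans hα))) →
      IsFullMetricRel V (fun a b r =>
        (E a b ∧ r = d a b) ∨
        ∃ α, ∃ hα : α < lam,
          ((a = (S1 α hα (fun γ hγ => s γ (hγ.trans hα))).1 ∧
            b = (S1 α hα (fun γ hγ => s γ (hγ.trans hα))).2) ∨
           (a = (S1 α hα (fun γ hγ => s γ (hγ.trans hα))).2 ∧
            b = (S1 α hα (fun γ hγ => s γ (hγ.trans hα))).1)) ∧
          r = s α hα))

/-- Player II has a winning strategy in the metric-extending game `Game_d(lam, Fam)`: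
there is a function `T` assigning to each inning `β < lam` and each sequence of moves of
player I (of length `β + 1`) an answer in the set component of the last move, such that
for every legal play of player I, the resulting relation is not a full metric on `V`. -/
def WinningStratII (V : Set X) (E : X → X → Prop) (d : X → X → ℝ)
    (lam : Ordinal.{u}) (Fam : Set (Set ℝ)) : Prop :=
  ∃ T : ∀ β : Ordinal.{u}, β < lam → (∀ α : Ordinal.{u}, α ≤ β → (X × X) × Set ℝ) → ℝ,
    (∀ β hβ p, (p β le_rfl).2 ∈ Fam → T β hβ p ∈ (p β le_rfl).2) ∧
    (∀ p : ∀ α : Ordinal.{u}, α < lam → (X × X) × Set ℝ,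
      (∀ α hα, (p α hα).1.1 ∈ V ∧ (p α hα).1.2 ∈ V ∧ (p α hα).1.1 ≠ (p α hα).1.2 ∧
        (p α hα).2 ∈ Fam) →
      ¬ IsFullMetricRel V (fun a b r =>
        (E a b ∧ r = d a b) ∨
        ∃ α, ∃ hα : α < lam,
          ((a = (p α hα).1.1 ∧ b = (p α hα).1.2) ∨
           (a = (p α hα).1.2 ∧ b = (p α hα).1.1)) ∧
          r = T α hα (fun γ hγ => p γ (lt_of_le_of_lt hγ hα))))

/-- The edge relation of the glued graph `E_d = E_p ∪ ⋃_{f ∈ F} E_f`. -/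
def gluedEdge (Ep : X → X → Prop) (F : Set ((X → X → Prop) × (X → X → ℝ))) :
    X → X → Prop :=
  fun a b => Ep a b ∨ ∃ f ∈ F, f.1 a b

/-- `Λ(v; B) = inf {d̂(a,v) + d̂(v,b) - d̂(a,b) : a, b ∈ B}`. -/
noncomputable def Lam (E : X → X → Prop) (d : X → X → ℝ) (v : X) (B : Set X) : ℝ :=
  sInf {r | ∃ a ∈ B, ∃ b ∈ B, r = hatd E d a v + hatd E d v b - hatd E d a b}

/-- The gluing setup: a graph pseudometric `p = (Ep, wp)` and a family `F` of graph
pseudometrics such that each member meets `V_p`, agrees with `p̂` on the intersection of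
the vertex sets, and distinct members only meet inside `V_p`; `wd` is the glued weight
function `d = p ∪ ⋃ F` on `E_d = E_p ∪ ⋃_{f ∈ F} E_f`. -/
structure GluingSetup (Ep : X → X → Prop) (wp : X → X → ℝ)
    (F : Set ((X → X → Prop) × (X → X → ℝ))) (wd : X → X → ℝ) : Prop where
  hp : IsGraphPseudometric Ep wp
  hF : ∀ f ∈ F, IsGraphPseudometric f.1 f.2
  meet : ∀ f ∈ F, (Vtx f.1 ∩ Vtx Ep).Nonempty
  agree : ∀ f ∈ F, ∀ x ∈ Vtx f.1 ∩ Vtx Ep, ∀ y ∈ Vtx f.1 ∩ Vtx Ep, x ≠ y →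
    hatd f.1 f.2 x y = hatd Ep wp x y
  inter_sub : ∀ f ∈ F, ∀ g ∈ F, f ≠ g → Vtx f.1 ∩ Vtx g.1 ⊆ Vtx Ep
  wd_p : ∀ ⦃a b⦄, Ep a b → wd a b = wp a b
  wd_F : ∀ f ∈ F, ∀ ⦃a b⦄, f.1 a b → wd a b = f.2 a b

/-!
A function `φ` with `φ a ≤ d(ac) + φ c` along every edge `ac` satisfies `φ a ≤ d̂(a,b) + φ b`, by
telescoping along walks. Hence `D ≤ D̂` on the edges of the extended graph as soon as some `ρ`
satisfies `ρ(b,b) ≤ 0`, `ρ(a,b) ≤ D(ac) + ρ(c,b)` for every edge `ac`, and `D ≤ ρ` on edges. Since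
passing the new edge twice never pays off, the right choice of `ρ(a,b)` is the least of `d̂(a,b)`
and the lengths of the two detours through `xy`. Then `r ≤ d̂(x,y)` gives `D ≤ ρ` on the new edge,
and `ď(x,y) ≤ r` gives it on the old ones.
-/

section Walks

variable {E E' : X → X → Prop} {d : X → X → ℝ} {a b c : X} {s t : ℝ}

lemma zero_mem_walkSums (a : X) : (0 : ℝ) ∈ walkSums E d a a :=
  ⟨0, fun _ => a, rfl, rfl, by simp, by simp⟩

lemma cons_mem_walkSums (hab : E a b) (hs : s ∈ walkSums E d b c) :
    d a b + s ∈ walkSums E d a c := by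
  obtain ⟨n, w, rfl, rfl, hw, rfl⟩ := hs
  refine ⟨n + 1, fun i => Nat.casesOn i a w, rfl, rfl, ?_, ?_⟩
  · rintro (_ | i) hi
    · exact hab
    · exact hw i (by lia)
  · rw [Finset.sum_range_succ', add_comm]
    rfl

lemma edge_mem_walkSums (hab : E a b) : d a b ∈ walkSums E d a b := by
  simpa only [add_zero] using cons_mem_walkSums hab (zero_mem_walkSums (d := d) b)

lemma walkSums_induction {P : X → ℝ → Prop} (nil : P b 0)
    (cons : ∀ ⦃a c s⦄, E a c → P c s → P a (d a c + s)) (hs : s ∈ walkSums E d a b) : P a s := by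
  obtain ⟨n, w, rfl, rfl, hw, rfl⟩ := hs
  induction n generalizing w with
  | zero => simpa only [Finset.range_zero, Finset.sum_empty] using nil
  | succ n ih =>
    rw [Finset.sum_range_succ', add_comm]
    exact cons (hw 0 n.succ_pos) (ih (fun i => w (i + 1)) nil fun i hi => hw (i + 1) (by lia))

lemma add_mem_walkSums (hs : s ∈ walkSums E d a b) (ht : t ∈ walkSums E d b c) :
    s + t ∈ walkSums E d a c := by
  refine walkSums_induction (P := fun a s => s + t ∈ walkSums E d a c) ?_ ?_ hs
  · rwa [zero_add]
  · intro a a' s haa' ih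
    rw [add_assoc]
    exact cons_mem_walkSums haa' ih

lemma reverse_mem_walkSums (hsymm : ∀ ⦃a b⦄, E a b → E b a)
    (hwt : ∀ ⦃a b⦄, E a b → d a b = d b a) (hs : s ∈ walkSums E d a b) :
    s ∈ walkSums E d b a := by
  refine walkSums_induction (P := fun a s => s ∈ walkSums E d b a) (zero_mem_walkSums b) ?_ hs
  intro a c s hac ih
  rw [add_comm, hwt hac]
  exact add_mem_walkSums ih (edge_mem_walkSums (hsymm hac))

lemma le_add_of_mem_walkSums {φ : X → ℝ} (hφ : ∀ ⦃a c⦄, E a c → φ a ≤ d a c + φ c)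
    (hs : s ∈ walkSums E d a b) : φ a ≤ s + φ b :=
  walkSums_induction (P := fun a s => φ a ≤ s + φ b) (zero_add _).ge
    (fun _ _ _ hac ih => by linarith [hφ hac]) hs

lemma nonneg_of_mem_walkSums (hnn : ∀ ⦃a b⦄, E a b → 0 ≤ d a b) (hs : s ∈ walkSums E d a b) :
    0 ≤ s := by
  simpa using le_add_of_mem_walkSums (φ := 0) (by simpa using hnn) hs

lemma Joined.mono (hE : ∀ ⦃a b⦄, E a b → E' a b) (hab : Joined E a b) : Joined E' a b :=
  let ⟨n, w, h0, hn, hw⟩ := hab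
  ⟨n, w, h0, hn, fun i hi => hE (hw i hi)⟩

lemma Joined.walkSums_nonempty (hab : Joined E a b) : (walkSums E d a b).Nonempty :=
  let ⟨n, w, h0, hn, hw⟩ := hab
  ⟨_, n, w, h0, hn, hw, rfl⟩

end Walks

section ShortestPath

variable {E : X → X → Prop} {d : X → X → ℝ} {a b c : X}

lemma Joined.le_hatd_add {φ : X → ℝ} (hab : Joined E a b)
    (hφ : ∀ ⦃a c⦄, E a c → φ a ≤ d a c + φ c) : φ a ≤ hatd E d a b + φ b :=
  sub_le_iff_le_add.1 <| le_csInf hab.walkSums_nonempty fun _ hs =>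
    sub_le_iff_le_add.2 (le_add_of_mem_walkSums hφ hs)

lemma hatd_comm (hsymm : ∀ ⦃a b⦄, E a b → E b a) (hwt : ∀ ⦃a b⦄, E a b → d a b = d b a)
    (a b : X) : hatd E d a b = hatd E d b a :=
  congrArg sInf <| Set.ext fun _ =>
    ⟨reverse_mem_walkSums hsymm hwt, reverse_mem_walkSums hsymm hwt⟩

lemma hatd_nonneg (hnn : ∀ ⦃a b⦄, E a b → 0 ≤ d a b) (a b : X) : 0 ≤ hatd E d a b :=
  Real.sInf_nonneg fun _ => nonneg_of_mem_walkSums hnn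

lemma hatd_le_of_mem_walkSums (hnn : ∀ ⦃a b⦄, E a b → 0 ≤ d a b) {s : ℝ}
    (hs : s ∈ walkSums E d a b) : hatd E d a b ≤ s :=
  csInf_le ⟨0, fun _ => nonneg_of_mem_walkSums hnn⟩ hs

lemma hatd_self (hnn : ∀ ⦃a b⦄, E a b → 0 ≤ d a b) (a : X) : hatd E d a a = 0 :=
  (hatd_le_of_mem_walkSums hnn (zero_mem_walkSums a)).antisymm (hatd_nonneg hnn a a)

lemma hatd_le_wt (hnn : ∀ ⦃a b⦄, E a b → 0 ≤ d a b) (hab : E a b) : hatd E d a b ≤ d a b :=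
  hatd_le_of_mem_walkSums hnn (edge_mem_walkSums hab)

lemma hatd_triangle (hnn : ∀ ⦃a b⦄, E a b → 0 ≤ d a b) (hab : Joined E a b)
    (hbc : Joined E b c) : hatd E d a c ≤ hatd E d a b + hatd E d b c := by
  rw [← sub_le_iff_le_add]
  refine le_csInf hab.walkSums_nonempty fun s hs => ?_
  rw [sub_le_comm]
  refine le_csInf hbc.walkSums_nonempty fun t ht => ?_
  rw [sub_le_iff_le_add']
  exact hatd_le_of_mem_walkSums hnn (add_mem_walkSums hs ht)

lemma hatd_le_wt_add_hatd (hnn : ∀ ⦃a b⦄, E a b → 0 ≤ d a b) (hab : E a b)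
    (hbc : Joined E b c) : hatd E d a c ≤ d a b + hatd E d b c :=
  sub_le_iff_le_add'.1 <| le_csInf hbc.walkSums_nonempty fun _ hs =>
    sub_le_iff_le_add'.2 (hatd_le_of_mem_walkSums hnn (cons_mem_walkSums hab hs))

end ShortestPath

namespace IsGraphPseudometric

variable {E : X → X → Prop} {d : X → X → ℝ} {x y a b : X}

lemma bddAbove_checkd (hd : IsGraphPseudometric E d) (hx : x ∈ Vtx E) (hy : y ∈ Vtx E) :
    BddAbove ({0} ∪ {r | ∃ a b, E a b ∧ r = d a b - hatd E d a x - hatd E d y b}) := by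
  refine ⟨hatd E d x y, ?_⟩
  rintro _ (rfl | ⟨a, b, hab, rfl⟩)
  · exact hatd_nonneg hd.nonneg x y
  · have ha : a ∈ Vtx E := ⟨b, hab⟩
    have hb : b ∈ Vtx E := ⟨a, hd.symm hab⟩
    have hxb := hatd_triangle hd.nonneg (hd.connected x hx y hy) (hd.connected y hy b hb)
    have hab' := hatd_triangle hd.nonneg (hd.connected a ha x hx) (hd.connected x hx b hb)
    linarith [hd.edge_eq hab]

lemma checkd_nonneg (hd : IsGraphPseudometric E d) (hx : x ∈ Vtx E) (hy : y ∈ Vtx E) :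
    0 ≤ checkd E d x y :=
  le_csSup (hd.bddAbove_checkd hx hy) (Or.inl rfl)

lemma wt_le_hatd_add_checkd_add_hatd (hd : IsGraphPseudometric E d) (hx : x ∈ Vtx E)
    (hy : y ∈ Vtx E) (hab : E a b) : d a b ≤ hatd E d a x + checkd E d x y + hatd E d y b := by
  have : d a b - hatd E d a x - hatd E d y b ≤ checkd E d x y :=
    le_csSup (hd.bddAbove_checkd hx hy) (Or.inr ⟨a, b, hab, rfl⟩)
  linarith

end IsGraphPseudometric

section ExtensionGraph

variable {E : X → X → Prop} {d : X → X → ℝ} {x y : X} {r : ℝ}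

lemma vtx_extEdge (hx : x ∈ Vtx E) (hy : y ∈ Vtx E) : Vtx (extEdge E x y) = Vtx E := by
  ext a
  constructor
  · rintro ⟨b, hab | ⟨rfl, -⟩ | ⟨rfl, -⟩⟩
    exacts [⟨b, hab⟩, hx, hy]
  · exact fun ⟨b, hab⟩ => ⟨b, Or.inl hab⟩

lemma extEdge_symm (hsymm : ∀ ⦃a b⦄, E a b → E b a) ⦃a b : X⦄ (hab : extEdge E x y a b) :
    extEdge E x y b a :=
  hab.imp (@hsymm a b) fun h => h.symm.imp And.symm And.symm

lemma extEdge_irrefl (hirrefl : ∀ a, ¬ E a a) (hxy : x ≠ y) (a : X) : ¬ extEdge E x y a a := by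
  rintro (haa | ⟨rfl, h⟩ | ⟨rfl, h⟩)
  exacts [hirrefl a haa, hxy h, hxy h.symm]

lemma extWt_left : extWt d x y r x y = r := if_pos (Or.inl ⟨rfl, rfl⟩)

lemma extWt_right : extWt d x y r y x = r := if_pos (Or.inr ⟨rfl, rfl⟩)

lemma extWt_of_edge (hsymm : ∀ ⦃a b⦄, E a b → E b a) (hnE : ¬ E x y) {a b : X} (hab : E a b) :
    extWt d x y r a b = d a b := by
  refine if_neg ?_
  rintro (⟨rfl, rfl⟩ | ⟨rfl, rfl⟩)
  exacts [hnE hab, hnE (hsymm hab)]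

lemma extWt_cases (hsymm : ∀ ⦃a b⦄, E a b → E b a) (hnE : ¬ E x y) {P : X → X → ℝ → Prop}
    (edge : ∀ ⦃a b⦄, E a b → P a b (d a b)) (left : P x y r) (right : P y x r)
    ⦃a b : X⦄ (hab : extEdge E x y a b) : P a b (extWt d x y r a b) := by
  obtain hab | ⟨rfl, rfl⟩ | ⟨rfl, rfl⟩ := hab
  · rw [extWt_of_edge hsymm hnE hab]
    exact edge hab
  · rwa [extWt_left]
  · rwa [extWt_right]

end ExtensionGraph

/-- The candidate for the shortest-path distance from `a` to `b` in the graph extended by the edge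
`xy` of weight `r`: the least length of a connection using the new edge at most once, in either
direction. -/
noncomputable def extDist (E : X → X → Prop) (d : X → X → ℝ) (x y : X) (r : ℝ) (a b : X) : ℝ :=
  min (hatd E d a b)
    (min (hatd E d a x + r + hatd E d y b) (hatd E d a y + r + hatd E d x b))

section ExtensionDistance

variable {E : X → X → Prop} {d : X → X → ℝ} {x y a b c : X} {r : ℝ}

lemma extDist_swap : extDist E d y x r a b = extDist E d x y r a b :=
  congrArg (min _) (min_comm _ _)

lemma extDist_le_wt_add (hnn : ∀ ⦃a b⦄, E a b → 0 ≤ d a b) (hac : E a c) (hcb : Joined E c b)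
    (hcx : Joined E c x) (hcy : Joined E c y) :
    extDist E d x y r a b ≤ d a c + extDist E d x y r c b := by
  simp only [extDist, ← min_add_add_left]
  have hb := hatd_le_wt_add_hatd hnn hac hcb
  have hx := hatd_le_wt_add_hatd hnn hac hcx
  have hy := hatd_le_wt_add_hatd hnn hac hcy
  gcongr ?_ ⊓ (?_ ⊓ ?_) <;> linarith

lemma extDist_left_le_add (hnn : ∀ ⦃a b⦄, E a b → 0 ≤ d a b) (hr : 0 ≤ r) :
    extDist E d x y r x b ≤ r + extDist E d x y r y b := by
  have hxx := hatd_self hnn x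
  have hyx := hatd_nonneg hnn y x
  have hyy := hatd_self hnn y
  simp only [extDist, ← min_add_add_left, le_min_iff, min_le_iff]
  refine ⟨Or.inr (Or.inl ?_), Or.inr (Or.inl ?_), Or.inl ?_⟩ <;> linarith

lemma extDist_le_extWt_add (hd : IsGraphPseudometric E d) (hx : x ∈ Vtx E) (hy : y ∈ Vtx E)
    (hb : b ∈ Vtx E) (hnE : ¬ E x y) (hr : 0 ≤ r) ⦃a c : X⦄ (hac : extEdge E x y a c) :
    extDist E d x y r a b ≤ extWt d x y r a c + extDist E d x y r c b := by
  refine extWt_cases (P := fun a c t => extDist E d x y r a b ≤ t + extDist E d x y r c b)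
    hd.symm hnE (fun a c hac => ?_) (extDist_left_le_add hd.nonneg hr) ?_ hac
  · have hc : c ∈ Vtx E := ⟨a, hd.symm hac⟩
    exact extDist_le_wt_add hd.nonneg hac (hd.connected c hc b hb) (hd.connected c hc x hx)
      (hd.connected c hc y hy)
  · simpa only [extDist_swap] using extDist_left_le_add (x := y) (y := x) (b := b) hd.nonneg hr

lemma extDist_le_hatd (hd : IsGraphPseudometric E d) (hx : x ∈ Vtx E) (hy : y ∈ Vtx E)
    (ha : a ∈ Vtx E) (hb : b ∈ Vtx E) (hnE : ¬ E x y) (hr : 0 ≤ r) :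
    extDist E d x y r a b ≤ hatd (extEdge E x y) (extWt d x y r) a b := by
  have hab : Joined (extEdge E x y) a b := (hd.connected a ha b hb).mono fun _ _ => Or.inl
  have hbb : extDist E d x y r b b ≤ 0 := (min_le_left _ _).trans (hatd_self hd.nonneg b).le
  linarith [hab.le_hatd_add (φ := (extDist E d x y r · b))
    (extDist_le_extWt_add hd hx hy hb hnE hr)]

lemma le_extDist (hnn : ∀ ⦃a b⦄, E a b → 0 ≤ d a b) (hr : 0 ≤ r) (hrxy : r ≤ hatd E d x y) :
    r ≤ extDist E d x y r x y := by
  have h := hatd_nonneg hnn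
  exact le_min hrxy (le_min (by linarith [h x x, h y y]) (by linarith [h x y]))

lemma wt_le_extDist (hd : IsGraphPseudometric E d) (hx : x ∈ Vtx E) (hy : y ∈ Vtx E)
    (hr : checkd E d x y ≤ r) (hab : E a b) : d a b ≤ extDist E d x y r a b := by
  refine le_min (hd.edge_eq hab).le (le_min ?_ ?_)
  · linarith [hd.wt_le_hatd_add_checkd_add_hatd hx hy hab]
  · rw [hd.wt_symm hab, hatd_comm hd.symm hd.wt_symm a y, hatd_comm hd.symm hd.wt_symm x b]
    linarith [hd.wt_le_hatd_add_checkd_add_hatd hx hy (hd.symm hab)]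

lemma extWt_le_extDist (hd : IsGraphPseudometric E d) (hx : x ∈ Vtx E) (hy : y ∈ Vtx E)
    (hnE : ¬ E x y) (hr₁ : checkd E d x y ≤ r) (hr₂ : r ≤ hatd E d x y) ⦃a b : X⦄
    (hab : extEdge E x y a b) : extWt d x y r a b ≤ extDist E d x y r a b := by
  have hr : 0 ≤ r := (hd.checkd_nonneg hx hy).trans hr₁
  refine extWt_cases (P := fun a b t => t ≤ extDist E d x y r a b) hd.symm hnE
    (fun _ _ => wt_le_extDist hd hx hy hr₁) (le_extDist hd.nonneg hr hr₂) ?_ hab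
  rw [← extDist_swap]
  exact le_extDist hd.nonneg hr (hr₂.trans_eq (hatd_comm hd.symm hd.wt_symm x y))

end ExtensionDistance

theorem one_step_extension_pseudometric_general {E : X → X → Prop} {d : X → X → ℝ}
    (hd : IsGraphPseudometric E d) {x y : X} (hx : x ∈ Vtx E) (hy : y ∈ Vtx E) (hxy : x ≠ y)
    (hnE : ¬ E x y) {r : ℝ} (hr₁ : checkd E d x y ≤ r) (hr₂ : r ≤ hatd E d x y) :
    IsGraphPseudometric (extEdge E x y) (extWt d x y r) := by
  have hr : 0 ≤ r := (hd.checkd_nonneg hx hy).trans hr₁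
  have hV : Vtx (extEdge E x y) = Vtx E := vtx_extEdge hx hy
  have hsymm := extEdge_symm (x := x) (y := y) hd.symm
  have hnn := extWt_cases (P := fun _ _ t => 0 ≤ t) hd.symm hnE hd.nonneg hr hr
  refine ⟨hsymm, extEdge_irrefl hd.irrefl hxy, ?wt_symm, hnn, ?connected, ?edge_eq⟩
  case wt_symm =>
    refine extWt_cases (P := fun a b t => t = extWt d x y r b a) hd.symm hnE
      (fun a b hab => ?_) extWt_right.symm extWt_left.symm
    rw [extWt_of_edge hd.symm hnE (hd.symm hab), hd.wt_symm hab]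
  case connected =>
    rw [hV]
    exact fun a ha b hb => (hd.connected a ha b hb).mono fun _ _ => Or.inl
  case edge_eq =>
    intro a b hab
    have ha : a ∈ Vtx E := hV ▸ ⟨b, hab⟩
    have hb : b ∈ Vtx E := hV ▸ ⟨a, hsymm hab⟩
    exact ((extWt_le_extDist hd hx hy hnE hr₁ hr₂ hab).trans
      (extDist_le_hatd hd hx hy ha hb hnE hr)).antisymm (hatd_le_wt hnn hab)

/-- For every graph pseudometric `d` on a set `X`, every
`xy ∈ [X]² \ E`, and every real `r` with `ď(x,y) ≤ r ≤ d̂(x,y)`, the function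
`D = d ∪ {⟨xy, r⟩}` is a graph pseudometric. -/
theorem one_step_extension_pseudometric (E : X → X → Prop) (d : X → X → ℝ)
    (hd : IsGraphPseudometric E d) (hvert : ∀ z : X, z ∈ Vtx E)
    (x y : X) (hxy : x ≠ y) (hnE : ¬ E x y) (r : ℝ)
    (hr₁ : checkd E d x y ≤ r) (hr₂ : r ≤ hatd E d x y) :
    IsGraphPseudometric (extEdge E x y) (extWt d x y r) :=
  one_step_extension_pseudometric_general hd (hvert x) (hvert y) hxy hnE hr₁ hr₂

end GraphMetricPaper
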